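/- arXiv:1909.05579 — 2 statements merged into one kernel-verified Lean document; each statement's English description precedes it below -/
import Mathlib

section
/- Let R be a commutative ring and let a_0, a_1, a_2, a_3, b_0, b_1, b_2, b_3 ∈ R. For 0 ≤ i, j ≤ 3 set [ij] := a_i·b_j − a_j·b_i. Then the determinant of the 3×3 matrix with rows ([03], [02], [01]), ([13], [12]+[03], [02]), ([23], [13], [03]) equals the determinant of the 6×6 Sylvester matrix with rows (a_0, a_1, a_2, a_3, 0, 0), (0, a_0, a_1, a_2, a_3, 0), (0, 0, a_0, a_1, a_2, a_3), (b_0, b_1, b_2, b_3, 0, 0), (0, b_0, b_1, b_2, b_3, 0), (0, 0, b_0, b_1, b_2, b_3), i.e. equals the resultant of the two binary cubic forms f = a_0x_0^3 + a_1x_0^2x_1 + a_2x_0x_1^2 + a_3x_1^3 and g = b_0x_0^3 + b_1x_0^2x_1 + b_2x_0x_1^2 + b_3x_1^3. -/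
/-!
Let `f` and `g` be the dehomogenizations at `x₀ = 1`. The Sylvester matrix of two forms of the same
degree `n` splits into four `n × n` Toeplitz blocks. The two upper blocks are the matrices of
multiplication by `f` and by `g` modulo `Xⁿ`, so they commute, and the determinant of the block
matrix collapses to that of a single `n × n` matrix of the form `D * A - C * B`. Its entries are
sums of Plücker coordinates; for `n = 3` antisymmetry `[ij] = -[ji]` leaves exactly the Chow matrix.
-/

section Blocks

open Matrix Polynomial

variable {n R : Type*} [Fintype n] [DecidableEq n] [CommRing R]

theorem det_fromBlocks_mul_det_of_commute {A B : Matrix n n R} (hAB : Commute A B)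
    (C D : Matrix n n R) :
    (fromBlocks A B C D).det * A.det = (D * A - C * B).det * A.det := by
  have elimination :
      fromBlocks A B C D * fromBlocks 1 (-B) 0 A = fromBlocks A 0 C (D * A - C * B) := by
    simp [fromBlocks_multiply, hAB.eq, neg_add_eq_sub]
  calc (fromBlocks A B C D).det * A.det
      = (fromBlocks A B C D * fromBlocks 1 (-B) 0 A).det := by
        rw [det_mul, det_fromBlocks_zero₂₁, det_one, one_mul]
    _ = (D * A - C * B).det * A.det := by
        rw [elimination, det_fromBlocks_zero₁₂, mul_comm]

theorem det_fromBlocks_of_commute {A B : Matrix n n R} (hAB : Commute A B) (C D : Matrix n n R) :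
    (fromBlocks A B C D).det = (D * A - C * B).det := by
  -- `A.det` may be a zero divisor, so deform `A` to `X + A` over `R[X]`: its determinant is monic.
  let ι : Matrix n n R →+* Matrix n n R[X] := Polynomial.C.mapMatrix
  let ε : Matrix n n R[X] →+* Matrix n n R := (evalRingHom 0).mapMatrix
  have ε_ι (M : Matrix n n R) : ε (ι M) = M := by ext; simp [ε, ι]
  let A' : Matrix n n R[X] := charmatrix (-A)
  have ε_A' : ε A' = A := by
    ext i j
    by_cases h : i = j <;> simp [ε, A', h]
  have hA'B : Commute A' (ι B) :=
    (scalar_commute X (Commute.all X) (ι B)).sub_left (hAB.neg_left.map ι)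
  have det_A'_regular : IsRegular A'.det := (charpoly_monic (-A)).isRegular
  have deformed :
      (fromBlocks A' (ι B) (ι C) (ι D)).det = (ι D * A' - ι C * ι B).det :=
    det_A'_regular.right (det_fromBlocks_mul_det_of_commute hA'B (ι C) (ι D))
  have ε_fromBlocks : (evalRingHom 0).mapMatrix (fromBlocks A' (ι B) (ι C) (ι D)) =
      fromBlocks A B C D := by
    rw [RingHom.mapMatrix_apply, fromBlocks_map]
    change fromBlocks (ε A') (ε (ι B)) (ε (ι C)) (ε (ι D)) = fromBlocks A B C D
    rw [ε_A', ε_ι, ε_ι, ε_ι]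
  have ε_complement : ε (ι D * A' - ι C * ι B) = D * A - C * B := by
    simp only [map_sub, map_mul, ε_A', ε_ι]
  rw [← ε_fromBlocks, ← RingHom.map_det, deformed, RingHom.map_det]
  exact congr_arg det ε_complement

end Blocks

section Toeplitz

open Matrix Polynomial

/-- The lower triangular Toeplitz matrix of multiplication by `f` on `R[X] / (X ^ n)` in the
monomial basis, whose columns hold the coefficients of `f`, `f * X`, `f * X ^ 2`, … . -/
noncomputable def lowerToeplitz {R : Type*} [Semiring R] (f : R[X]) (n : ℕ) :
    Matrix (Fin n) (Fin n) R :=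
  of fun i j ↦ (f * X ^ (j : ℕ)).coeff i

/-- The upper triangular Toeplitz matrix of `f` as a polynomial of formal degree `n`: it continues
the columns of `lowerToeplitz f n` below row `n`, ignoring the coefficients of `f` beyond
degree `n`. -/
def upperToeplitz {R : Type*} [Semiring R] (f : R[X]) (n : ℕ) : Matrix (Fin n) (Fin n) R :=
  of fun i j ↦ if i ≤ j then f.coeff (n + i - j) else 0

theorem lowerToeplitz_apply {R : Type*} [Semiring R] (f : R[X]) (n : ℕ) (i j : Fin n) :
    lowerToeplitz f n i j = if j ≤ i then f.coeff (i - j) else 0 :=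
  coeff_mul_X_pow' f j i

theorem sum_coeff_mul_X_pow_mul_coeff {R : Type*} [Semiring R] (f h : R[X]) {n i : ℕ} (hi : i < n) :
    ∑ k : Fin n, (f * X ^ (k : ℕ)).coeff i * h.coeff k = (f * h).coeff i := by
  calc ∑ k : Fin n, (f * X ^ (k : ℕ)).coeff i * h.coeff k
      = ∑ k ∈ Finset.range n, (f * X ^ k).coeff i * h.coeff k :=
        Fin.sum_univ_eq_sum_range (fun k ↦ (f * X ^ k).coeff i * h.coeff k) n
    _ = ∑ k ∈ Finset.range (i + 1), (f * X ^ k).coeff i * h.coeff k := by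
        refine (Finset.sum_subset (Finset.range_mono hi) fun k _ hk ↦ ?_).symm
        rw [coeff_mul_X_pow', if_neg (by simpa [Nat.lt_succ_iff] using hk), zero_mul]
    _ = ∑ k ∈ Finset.range (i + 1), f.coeff (i - k) * h.coeff k := by
        refine Finset.sum_congr rfl fun k hk ↦ ?_
        rw [coeff_mul_X_pow', if_pos (Finset.mem_range_succ_iff.mp hk)]
    _ = (f * h).coeff i := by
        rw [coeff_mul, ← Finset.Nat.sum_antidiagonal_swap,
          Finset.Nat.sum_antidiagonal_eq_sum_range_succ_mk]
        rfl

theorem lowerToeplitz_mul {R : Type*} [Semiring R] (f g : R[X]) (n : ℕ) :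
    lowerToeplitz (f * g) n = lowerToeplitz f n * lowerToeplitz g n := by
  ext i j
  simp only [lowerToeplitz, mul_apply, of_apply]
  rw [sum_coeff_mul_X_pow_mul_coeff f (g * X ^ (j : ℕ)) i.isLt, mul_assoc]

theorem lowerToeplitz_commute {R : Type*} [CommSemiring R] (f g : R[X]) (n : ℕ) :
    Commute (lowerToeplitz f n) (lowerToeplitz g n) := by
  rw [Commute, SemiconjBy, ← lowerToeplitz_mul, ← lowerToeplitz_mul, mul_comm]

theorem sylvester_submatrix_finSumFinEquiv {R : Type*} [Semiring R] (f g : R[X]) (n : ℕ) :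
    (sylvester f g n n).submatrix finSumFinEquiv finSumFinEquiv =
      fromBlocks (lowerToeplitz g n) (lowerToeplitz f n)
        (upperToeplitz g n) (upperToeplitz f n) := by
  have le_add (i j : Fin n) : (i : ℕ) ≤ j + n := by omega
  ext (i | i) (j | j) <;>
    simp [sylvester, lowerToeplitz_apply, upperToeplitz, le_add, add_comm n,
      -Fin.natAdd_eq_addNat]

theorem sylvester_three_three_transpose {R : Type*} [Semiring R] (f g : R[X]) :
    (sylvester g f 3 3)ᵀ =
      !![f.coeff 0, f.coeff 1, f.coeff 2, f.coeff 3, 0, 0;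
         0, f.coeff 0, f.coeff 1, f.coeff 2, f.coeff 3, 0;
         0, 0, f.coeff 0, f.coeff 1, f.coeff 2, f.coeff 3;
         g.coeff 0, g.coeff 1, g.coeff 2, g.coeff 3, 0, 0;
         0, g.coeff 0, g.coeff 1, g.coeff 2, g.coeff 3, 0;
         0, 0, g.coeff 0, g.coeff 1, g.coeff 2, g.coeff 3] := by
  ext i j
  fin_cases i <;> fin_cases j <;> simp [sylvester, Fin.addCases]

end Toeplitz

section Chow

open Matrix Polynomial

variable {R : Type*} [CommRing R]

/-- The Plücker coordinate `[pq]` of the pencil spanned by `f` and `g`. -/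
def pluckerCoord (f g : R[X]) (p q : ℕ) : R :=
  f.coeff p * g.coeff q - f.coeff q * g.coeff p

/-- The degree `n` analogue of the Chow-complex matrix of the twisted cubic, evaluated at the
Plücker coordinates of the pencil spanned by `f` and `g`. Up to sign and the order of its columns it
is the Bézout matrix of `f` and `g`. -/
def chowMatrix (f g : R[X]) (n : ℕ) : Matrix (Fin n) (Fin n) R :=
  of fun i j ↦ ∑ k with i ≤ k ∧ j ≤ k, pluckerCoord f g (k - j) (n + i - k)

theorem chowMatrix_eq_toeplitz (f g : R[X]) (n : ℕ) :
    chowMatrix f g n =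
      upperToeplitz g n * lowerToeplitz f n - upperToeplitz f n * lowerToeplitz g n := by
  ext i j
  simp only [chowMatrix, pluckerCoord, upperToeplitz, of_apply, Matrix.sub_apply, mul_apply,
    lowerToeplitz_apply, Finset.sum_filter, ite_and, ← Finset.sum_sub_distrib]
  refine Finset.sum_congr rfl fun k _ ↦ ?_
  split_ifs <;> ring

theorem chow_matrix_det_eq_sylvester_det_general (f g : R[X]) (n : ℕ) :
    (chowMatrix f g n).det = (sylvester g f n n).det := by
  rw [chowMatrix_eq_toeplitz, ← det_fromBlocks_of_commute (lowerToeplitz_commute f g n),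
    ← sylvester_submatrix_finSumFinEquiv, det_submatrix_equiv_self]

theorem chowMatrix_three (f g : R[X]) :
    chowMatrix f g 3 =
      !![pluckerCoord f g 0 3, pluckerCoord f g 0 2, pluckerCoord f g 0 1;
         pluckerCoord f g 1 3, pluckerCoord f g 1 2 + pluckerCoord f g 0 3, pluckerCoord f g 0 2;
         pluckerCoord f g 2 3, pluckerCoord f g 1 3, pluckerCoord f g 0 3] := by
  ext i j
  fin_cases i <;> fin_cases j <;>
    simp [chowMatrix, pluckerCoord, Finset.sum_filter, Fin.sum_univ_three] <;> ring

end Chow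

/-- The determinant of the 3 × 3 Chow-complex matrix of the twisted cubic, with the
Plücker coordinate `[ij]` specialized to `aᵢbⱼ - aⱼbᵢ`, equals the determinant of the
6 × 6 Sylvester matrix of the two binary cubics
`f = a₀x₀³ + a₁x₀²x₁ + a₂x₀x₁² + a₃x₁³` and `g = b₀x₀³ + b₁x₀²x₁ + b₂x₀x₁² + b₃x₁³`,
i.e. the resultant of `f` and `g`. -/
theorem chow_matrix_det_eq_sylvester_det {R : Type*} [CommRing R]
    (a b : Fin 4 → R) :
    (Matrix.det
      !![a 0 * b 3 - a 3 * b 0, a 0 * b 2 - a 2 * b 0, a 0 * b 1 - a 1 * b 0;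
         a 1 * b 3 - a 3 * b 1, (a 1 * b 2 - a 2 * b 1) + (a 0 * b 3 - a 3 * b 0),
           a 0 * b 2 - a 2 * b 0;
         a 2 * b 3 - a 3 * b 2, a 1 * b 3 - a 3 * b 1, a 0 * b 3 - a 3 * b 0]) =
    (Matrix.det
      !![a 0, a 1, a 2, a 3, 0, 0;
         0, a 0, a 1, a 2, a 3, 0;
         0, 0, a 0, a 1, a 2, a 3;
         b 0, b 1, b 2, b 3, 0, 0;
         0, b 0, b 1, b 2, b 3, 0;
         0, 0, b 0, b 1, b 2, b 3]) := by
  let f := (Cubic.mk (a 3) (a 2) (a 1) (a 0)).toPoly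
  let g := (Cubic.mk (b 3) (b 2) (b 1) (b 0)).toPoly
  have det_eq := chow_matrix_det_eq_sylvester_det_general f g 3
  rw [chowMatrix_three, ← Matrix.det_transpose (Polynomial.sylvester _ _ _ _),
    sylvester_three_three_transpose] at det_eq
  simpa only [pluckerCoord, f, g, Cubic.coeff_eq_a, Cubic.coeff_eq_b, Cubic.coeff_eq_c,
    Cubic.coeff_eq_d] using det_eq
end

section
/- Let Q_1, Q_2, Q_3, Q_4 be quadratic forms in ℂ[x_0, x_1, x_2, x_3] and let M = M(Q_1, Q_2, Q_3, Q_4) be their Nanson matrix. Then det M = 0 if and only if there exists a nonzero point p ∈ ℂ^4 with Q_1(p) = Q_2(p) = Q_3(p) = Q_4(p) = 0. -/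
/-!
Write `J` for the Jacobian determinant of forms `Qᵢ` of degree `d`, as many as there are variables,
and `(Q)` for the ideal they generate. Euler's identity says that the Jacobian matrix applied to the
vector of variables is `d Q`, so Cramer's rule gives `xₖ J = d ∑ᵢ adjₖᵢ Qᵢ`; differentiating,
`xₖ ∂ₗJ ≡ (d - 1) δₖₗ J` modulo `(Q)`.

If `p ≠ 0` is a common zero, these congruences show that `J` and all `∂ₗJ` vanish at `p`. For
`d = 2` in four variables all twenty cubics then vanish at `p`, and the vector of cubic monomials at
`p` lies in the kernel of Nanson's matrix.

Conversely, suppose that there is no common nontrivial zero, and take a linear relation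
`∑ᵢ Lᵢ Qᵢ + ∑ₗ bₗ ∂ₗJ = 0` between the cubics, with linear forms `Lᵢ`. Multiplying by `xₖ` gives
`bₖ J ∈ (Q)`. As `J ∉ (Q)`, this yields `b = 0`; and `∑ᵢ Lᵢ Qᵢ = 0` forces `Lᵢ ∈ (Q)`, so `Lᵢ = 0`
for reasons of degree.

The two facts about `(Q)` used here are proved in the local ring at the origin, where by the
Nullstellensatz every variable is in the radical of `(Q)`. There the variables can be exchanged one
at a time for linear combinations of the `Qᵢ`, keeping the family regular: no associated prime of
the other members contains all the `Qᵢ`, and a vector space over an infinite field is not a finite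
union of proper subspaces. The resulting regular family `y` is an invertible linear transform of
`Q`, which puts the coefficients of every syzygy of `Q` into `(Q)`. Moreover, if `y = A x`, then
undoing the exchanges one at a time shows that `det A ∈ (y)` would imply `1 ∈ (x)`; hence
`det A ∉ (y)`, and up to a unit `det A` is `J`.
-/

open MvPolynomial

/-- The exponent vectors of the 20 degree-3 monomials in `x₀, x₁, x₂, x₃`, in a fixed order. -/
noncomputable def cubicExp : Fin 20 → (Fin 4 →₀ ℕ) := fun m =>
  Finsupp.equivFunOnFinite.symm
    (![![3,0,0,0], ![2,1,0,0], ![2,0,1,0], ![2,0,0,1],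
       ![1,2,0,0], ![1,1,1,0], ![1,1,0,1], ![1,0,2,0], ![1,0,1,1], ![1,0,0,2],
       ![0,3,0,0], ![0,2,1,0], ![0,2,0,1], ![0,1,2,0], ![0,1,1,1], ![0,1,0,2],
       ![0,0,3,0], ![0,0,2,1], ![0,0,1,2], ![0,0,0,3]] m)

/-- The twenty cubic forms of Nanson's construction: the sixteen products `xⱼ · Qᵢ`
and the four partial derivatives of the Jacobian determinant of `Q₁, …, Q₄`. -/
noncomputable def nansonRow {K : Type*} [CommRing K]
    (Q : Fin 4 → MvPolynomial (Fin 4) K) : Fin 20 → MvPolynomial (Fin 4) K := fun r =>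
  if h : (r : ℕ) < 16 then
    X (⟨(r : ℕ) % 4, by omega⟩ : Fin 4) * Q ⟨(r : ℕ) / 4, by omega⟩
  else
    pderiv (⟨(r : ℕ) - 16, by omega⟩ : Fin 4)
      (Matrix.det (Matrix.of fun i j : Fin 4 => pderiv j (Q i)))

/-- Nanson's 20 × 20 matrix of four quaternary quadrics: the coefficient matrix of the
twenty cubics `nansonRow Q` with respect to the twenty degree-3 monomials. -/
noncomputable def nansonMatrix {K : Type*} [CommRing K]
    (Q : Fin 4 → MvPolynomial (Fin 4) K) : Matrix (Fin 20) (Fin 20) K :=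
  Matrix.of fun r c => coeff (cubicExp c) (nansonRow Q r)

open RingTheory.Sequence IsLocalRing

/-! ### Regular families -/

lemma isWeaklyRegular_concat_iff {R : Type*} [CommRing R] (rs : List R) (r : R) :
    IsWeaklyRegular R (rs ++ [r]) ↔
      IsWeaklyRegular R rs ∧ IsSMulRegular (R ⧸ Ideal.ofList rs) r := by
  rw [isWeaklyRegular_append_iff, isWeaklyRegular_singleton_iff, smul_eq_mul, Ideal.mul_top]

/-- A finite family is regular if its members, in the enumeration of the index type chosen by
`Finset.toList`, form a weakly regular sequence. For families in the maximal ideal of a Noetherian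
local ring this does not depend on the enumeration. -/
def IsRegularFamily {ι R : Type*} [Fintype ι] [CommRing R] (y : ι → R) : Prop :=
  IsWeaklyRegular R (Finset.univ.toList.map y)

lemma image_update_compl {α β : Type*} [DecidableEq α] (f : α → β) (a : α) (b : β) :
    Function.update f a b '' {a}ᶜ = f '' {a}ᶜ :=
  Set.image_congr fun _ hi => Function.update_of_ne hi b f

lemma span_range_le_maximalIdeal {ι R : Type*} [CommRing R] [IsLocalRing R] {y : ι → R}
    (hy : ∀ i, y i ∈ maximalIdeal R) : Ideal.span (Set.range y) ≤ maximalIdeal R :=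
  Ideal.span_le.mpr (Set.range_subset_iff.mpr hy)

section RegularFamily

variable {ι R : Type*} [Fintype ι] [CommRing R]

lemma IsRegularFamily.of_isLocalization {x : ι → R} (hx : IsRegularFamily x) (M : Submonoid R)
    (S : Type*) [CommRing S] [Algebra R S] [IsLocalization M S] :
    IsRegularFamily (algebraMap R S ∘ x) := by
  simpa only [IsRegularFamily, List.map_map] using IsWeaklyRegular.of_isLocalization S M hx

lemma isSMulRegular_quotient_span_X {σ : Type*} {s : Set σ} {j : σ} (hj : j ∉ s) :
    IsSMulRegular (MvPolynomial σ R ⧸ Ideal.span (X '' s : Set (MvPolynomial σ R)))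
      (X j : MvPolynomial σ R) := by
  refine (isSMulRegular_quotient_iff_mem_of_smul_mem _ _).mpr fun u hu => ?_
  rw [smul_eq_mul, mem_ideal_span_X_image] at hu
  refine mem_ideal_span_X_image.mpr fun m hm => ?_
  obtain ⟨i, hi, hmi⟩ := hu (Finsupp.single j 1 + m) (by
    rwa [mem_support_iff, coeff_X_mul, ← mem_support_iff])
  have hij : j ≠ i := by rintro rfl; exact hj hi
  exact ⟨i, hi, by simpa [Finsupp.single_apply, hij] using hmi⟩

lemma isRegularFamily_X {σ : Type*} [Fintype σ] :
    IsRegularFamily (X : σ → MvPolynomial σ R) := by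
  suffices ∀ l : List σ, l.Nodup → IsWeaklyRegular (MvPolynomial σ R) (l.map X) from
    this _ (Finset.nodup_toList _)
  intro l
  induction l using List.reverseRecOn with
  | nil => exact fun _ => .nil _ _
  | append_singleton l j ih =>
    intro hl
    rw [List.nodup_append] at hl
    have hj : j ∉ {i | i ∈ l} := fun h => hl.2.2 _ h _ (List.mem_singleton_self j) rfl
    have hspan : Ideal.ofList (l.map (X : σ → MvPolynomial σ R)) =
        Ideal.span (X '' {i | i ∈ l}) :=
      congrArg Ideal.span (Set.ext fun _ => List.mem_map)
    rw [List.map_append, List.map_singleton, isWeaklyRegular_concat_iff, hspan]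
    exact ⟨ih hl.1, isSMulRegular_quotient_span_X hj⟩

variable [IsLocalRing R] [IsNoetherianRing R] {y : ι → R}

lemma isRegularFamily_iff_erase [DecidableEq ι] (hy : ∀ i, y i ∈ maximalIdeal R) (m : ι) :
    IsRegularFamily y ↔ IsWeaklyRegular R ((Finset.univ.erase m).toList.map y) ∧
      IsSMulRegular (R ⧸ Ideal.span (y '' {m}ᶜ)) (y m) := by
  have hperm : (Finset.univ.toList.map y).Perm ((Finset.univ.erase m).toList.map y ++ [y m]) := by
    rw [← List.map_singleton, ← List.map_append]
    refine .map y ?_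
    rw [← Finset.insert_erase (Finset.mem_univ m)]
    simpa using (Finset.toList_insert (Finset.notMem_erase m Finset.univ)).trans
      (List.perm_append_singleton m _).symm
  have hspan : Ideal.ofList ((Finset.univ.erase m).toList.map y) = Ideal.span (y '' {m}ᶜ) :=
    congrArg Ideal.span (Set.ext fun _ => by simp)
  rw [← hspan, ← isWeaklyRegular_concat_iff]
  have hmem : ∀ r ∈ Finset.univ.toList.map y, r ∈ maximalIdeal R :=
    List.forall_mem_map.mpr fun i _ => hy i
  exact ⟨fun h => isWeaklyRegular_of_perm_of_subset_maximalIdeal h hperm hmem,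
    fun h => isWeaklyRegular_of_perm_of_subset_maximalIdeal h hperm.symm
      fun r hr => hmem r (hperm.mem_iff.mpr hr)⟩

lemma IsRegularFamily.isSMulRegular (hreg : IsRegularFamily y) (hy : ∀ i, y i ∈ maximalIdeal R)
    (m : ι) : IsSMulRegular (R ⧸ Ideal.span (y '' {m}ᶜ)) (y m) := by
  classical exact ((isRegularFamily_iff_erase hy m).mp hreg).2

lemma IsRegularFamily.update [DecidableEq ι] (hreg : IsRegularFamily y)
    (hy : ∀ i, y i ∈ maximalIdeal R) {m : ι} {w : R} (hw : w ∈ maximalIdeal R)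
    (hwreg : IsSMulRegular (R ⧸ Ideal.span (y '' {m}ᶜ)) w) :
    IsRegularFamily (Function.update y m w) := by
  have hy' : ∀ i, Function.update y m w i ∈ maximalIdeal R := fun i => by
    obtain rfl | hi := eq_or_ne i m
    · simpa using hw
    · simpa [hi] using hy i
  have herase : (Finset.univ.erase m).toList.map (Function.update y m w) =
      (Finset.univ.erase m).toList.map y :=
    List.map_congr_left fun i hi =>
      Function.update_of_ne (Finset.ne_of_mem_erase (Finset.mem_toList.mp hi)) w y
  rw [isRegularFamily_iff_erase hy' m, herase, image_update_compl, Function.update_self]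
  exact ⟨((isRegularFamily_iff_erase hy m).mp hreg).1, hwreg⟩

lemma IsRegularFamily.syzygy_mem (hreg : IsRegularFamily y)
    (hy : ∀ i, y i ∈ maximalIdeal R) {u : ι → R} (hu : ∑ i, u i * y i = 0) (m : ι) :
    u m ∈ Ideal.span (Set.range y) := by
  classical
  have hum : y m * u m ∈ Ideal.span (y '' {m}ᶜ) := by
    rw [← Finset.add_sum_erase _ _ (Finset.mem_univ m), add_eq_zero_iff_eq_neg, mul_comm] at hu
    rw [hu]
    refine neg_mem (sum_mem fun i hi => Ideal.mul_mem_left _ _ (Ideal.subset_span ?_))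
    exact Set.mem_image_of_mem y (Finset.ne_of_mem_erase hi)
  exact Ideal.span_mono (Set.image_subset_range _ _)
    ((isSMulRegular_quotient_iff_mem_of_smul_mem _ _).mp (hreg.isSMulRegular hy m) _ hum)

lemma IsRegularFamily.linearIndependent (hreg : IsRegularFamily y)
    (hy : ∀ i, y i ∈ maximalIdeal R) (k : Type*) [Field k] [Algebra k R] :
    LinearIndependent k y := by
  refine Fintype.linearIndependent_iff.mpr fun c hc i => by_contra fun hci => ?_
  have hmem := span_range_le_maximalIdeal hy <|
    hreg.syzygy_mem hy (u := fun i => algebraMap k R (c i))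
      (by simpa only [Algebra.smul_def] using hc) i
  exact (mem_maximalIdeal _).mp hmem ((IsUnit.mk0 _ hci).map (algebraMap k R))

end RegularFamily

/-! ### Exchanging members of a regular family -/

lemma exists_mem_isSMulRegular_of_mem_radical {k R : Type*} [Field k] [Infinite k] [CommRing R]
    [IsNoetherianRing R] [Algebra k R] (W : Submodule k R) (I : Ideal R) {x : R}
    (hx : x ∈ (Ideal.span (W : Set R)).radical) (hreg : IsSMulRegular (R ⧸ I) x) :
    ∃ w ∈ W, IsSMulRegular (R ⧸ I) w := by
  classical
  have hunion := biUnion_associatedPrimes_eq_compl_regular R (R ⧸ I)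
  have hfin := associatedPrimes.finite R (R ⧸ I)
  let restrict (P : Ideal R) : Subspace k W := (P.restrictScalars k).comap W.subtype
  have hrestrict : ⊤ ∉ hfin.toFinset.image restrict := by
    simp only [Finset.mem_image, Set.Finite.mem_toFinset, not_exists, not_and]
    intro P hP htop
    have hWP : Ideal.span (W : Set R) ≤ P := Ideal.span_le.mpr fun w hw =>
      (htop ▸ Submodule.mem_top : (⟨w, hw⟩ : W) ∈ restrict P)
    have hxP : x ∈ P := hP.1.radical_le_iff.mpr hWP hx
    exact (hunion.subset (Set.mem_biUnion hP hxP)) hreg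
  obtain ⟨w, hw⟩ := (Set.ne_univ_iff_exists_notMem _).mp
    (Subspace.biUnion_ne_univ_of_top_notMem hrestrict)
  refine ⟨w, w.2, not_not.mp fun hnot => hw ?_⟩
  obtain ⟨P, hP, hwP⟩ := Set.mem_iUnion₂.mp (hunion.superset hnot)
  exact Set.mem_biUnion (Finset.mem_image_of_mem restrict (hfin.mem_toFinset.mpr hP)) hwP

section Determinant

variable {ι R : Type*} [Fintype ι] [CommRing R]

open Matrix

lemma span_range_mulVec_le {κ : Type*} (A : Matrix κ ι R) (x : ι → R) :
    Ideal.span (Set.range (A *ᵥ x)) ≤ Ideal.span (Set.range x) :=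
  Ideal.span_le.mpr <| Set.range_subset_iff.mpr fun _ => sum_mem fun j _ =>
    Ideal.mul_mem_left _ _ (Ideal.subset_span (Set.mem_range_self j))

variable [DecidableEq ι]

lemma span_range_mulVec_of_isUnit {A : Matrix ι ι R} (hA : IsUnit A) (x : ι → R) :
    Ideal.span (Set.range (A *ᵥ x)) = Ideal.span (Set.range x) := by
  refine (span_range_mulVec_le A x).antisymm ?_
  have hx : A⁻¹ *ᵥ (A *ᵥ x) = x := by
    rw [mulVec_mulVec, nonsing_inv_mul _ ((isUnit_iff_isUnit_det A).mp hA), one_mulVec]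
  simpa only [hx] using span_range_mulVec_le A⁻¹ (A *ᵥ x)

/-- Modulo the other `y i`, where `y = A *ᵥ x`, Cramer's rule reads
`det A * x m = adjugate A m m * y m`. So if `det A = c * y m` there, then cancelling `y m` gives
`adjugate A m m = c * x m`, and `adjugate A m m` is the determinant in the conclusion. -/
lemma det_updateRow_single_mem_span {A : Matrix ι ι R} {x : ι → R} {m : ι}
    (hreg : IsSMulRegular (R ⧸ Ideal.span ((A *ᵥ x) '' {m}ᶜ)) ((A *ᵥ x) m))
    (hdet : A.det ∈ Ideal.span (Set.range (A *ᵥ x))) :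
    (A.updateRow m (Pi.single m 1)).det ∈
      Ideal.span (Set.range (A.updateRow m (Pi.single m 1) *ᵥ x)) := by
  rw [updateRow_mulVec, single_one_dotProduct, ← adjugate_apply]
  set y := A *ᵥ x with hy
  set I := Ideal.span (y '' {m}ᶜ)
  have hcramer : A.adjugate m m * y m - A.det * x m ∈ I := by
    have hsum : A.det * x m = ∑ i, A.adjugate m i * y i := by
      have h := congrFun (mulVec_mulVec x A.adjugate A) m
      rw [adjugate_mul, smul_mulVec, one_mulVec] at h
      exact h.symm
    rw [hsum, ← Finset.add_sum_erase _ _ (Finset.mem_univ m), sub_add_cancel_left]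
    exact neg_mem <| sum_mem fun i hi => Ideal.mul_mem_left _ _ <|
      Ideal.subset_span (Set.mem_image_of_mem y (Finset.ne_of_mem_erase hi))
  rw [← Set.insert_image_compl_eq_range y m, Ideal.mem_span_insert] at hdet
  obtain ⟨c, z, hz, hdet⟩ := hdet
  have hcancel : A.adjugate m m - c * x m ∈ I := by
    refine (isSMulRegular_quotient_iff_mem_of_smul_mem _ _).mp hreg _ ?_
    convert add_mem hcramer (Ideal.mul_mem_right (x m) I hz) using 1
    rw [hdet, smul_eq_mul]
    ring
  rw [← Set.insert_image_compl_eq_range _ m, image_update_compl, Function.update_self,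
    Ideal.mem_span_insert]
  exact ⟨c, _, hcancel, (add_sub_cancel _ _).symm⟩

end Determinant

/-! ### Complete intersections -/

section CompleteIntersection

open Matrix

section Local

variable {ι R : Type*} [Fintype ι] [CommRing R] [IsLocalRing R] [IsNoetherianRing R] {x : ι → R}

/-- The condition on `A` is what makes the induction run: exchanging `x m` back replaces row `m` of
`A` by a unit row, so undoing all exchanges turns `A` into the identity matrix. -/
lemma IsRegularFamily.exists_exchange [DecidableEq ι] {k : Type*} [Field k] [Infinite k]
    [Algebra k R] (hreg : IsRegularFamily x) (hx : ∀ i, x i ∈ maximalIdeal R)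
    (W : Submodule k R) (hW : (W : Set R) ⊆ maximalIdeal R)
    (hxW : ∀ i, x i ∈ (Ideal.span (W : Set R)).radical) (s : Finset ι) :
    ∃ y : ι → R, IsRegularFamily y ∧ (∀ i ∈ s, y i ∈ W) ∧ (∀ i ∉ s, y i = x i) ∧
      ∀ A : Matrix ι ι R, A *ᵥ x = y → (∀ i ∉ s, A i = Pi.single i 1) →
        A.det ∉ Ideal.span (Set.range y) := by
  induction s using Finset.induction_on with
  | empty =>
    refine ⟨x, hreg, by simp, by simp, fun A _ hA hdet => ?_⟩
    have hA1 : A = 1 := Matrix.ext fun i j => by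
      rw [hA i (Finset.notMem_empty i), one_eq_pi_single]
    rw [hA1, det_one] at hdet
    exact one_notMem_nonunits (span_range_le_maximalIdeal hx hdet)
  | insert m s hm ih =>
    obtain ⟨y, hyreg, hyW, hyx, hydet⟩ := ih
    have hy : ∀ i, y i ∈ maximalIdeal R := fun i =>
      if hi : i ∈ s then hW (hyW i hi) else hyx i hi ▸ hx i
    obtain ⟨w, hwW, hwreg⟩ := exists_mem_isSMulRegular_of_mem_radical W _ (hxW m)
      (hyx m hm ▸ hyreg.isSMulRegular hy m)
    refine ⟨Function.update y m w, hyreg.update hy (hW hwW) hwreg, fun i hi => ?_, fun i hi => ?_,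
      fun A hAx hA hdet => ?_⟩
    · obtain rfl | him := eq_or_ne i m
      · simpa using hwW
      · simpa [him] using hyW i (Finset.mem_of_mem_insert_of_ne hi him)
    · rw [Finset.mem_insert, not_or] at hi
      rw [Function.update_of_ne hi.1, hyx i hi.2]
    · have hAm : A.updateRow m (Pi.single m 1) *ᵥ x = y := by
        rw [updateRow_mulVec, single_one_dotProduct, hAx, Function.update_idem, ← hyx m hm,
          Function.update_eq_self]
      refine hydet _ hAm (fun i hi => ?_) (hAm ▸ det_updateRow_single_mem_span ?_ (hAx ▸ hdet))
      · obtain rfl | him := eq_or_ne i m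
        · exact updateRow_self
        · rw [updateRow_ne him, hA i (by simp [him, hi])]
      · rwa [hAx, image_update_compl, Function.update_self]

variable {q : ι → R}

lemma IsRegularFamily.exists_isRegularFamily_mulVec [DecidableEq ι] (k : Type*) [Field k]
    [Infinite k] [Algebra k R] (hreg : IsRegularFamily x) (hx : ∀ i, x i ∈ maximalIdeal R)
    (hq : ∀ i, q i ∈ maximalIdeal R)
    (hxq : ∀ i, x i ∈ (Ideal.span (Set.range q)).radical) :
    ∃ C : Matrix ι ι k, IsUnit C ∧ IsRegularFamily (C.map (algebraMap k R) *ᵥ q) ∧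
      ∀ A : Matrix ι ι R, A *ᵥ x = C.map (algebraMap k R) *ᵥ q →
        A.det ∉ Ideal.span (Set.range (C.map (algebraMap k R) *ᵥ q)) := by
  have hspan : Ideal.span (Submodule.span k (Set.range q) : Set R) = Ideal.span (Set.range q) :=
    Submodule.span_span_of_tower k R _
  have hW : (Submodule.span k (Set.range q) : Set R) ⊆ maximalIdeal R :=
    Ideal.span_le.mp (hspan.trans_le (span_range_le_maximalIdeal hq))
  obtain ⟨y, hyreg, hyW, -, hydet⟩ :=
    hreg.exists_exchange hx (Submodule.span k (Set.range q)) hW (by rwa [hspan]) Finset.univ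
  choose C hC using fun i =>
    (Submodule.mem_span_range_iff_exists_fun k).mp (hyW i (Finset.mem_univ i))
  have hCq : (of C).map (algebraMap k R) *ᵥ q = y := by
    ext i
    simp [mulVec, dotProduct, ← hC, Algebra.smul_def]
  refine ⟨of C, linearIndependent_rows_iff_isUnit.mp
    (.of_comp (Fintype.linearCombination k q) ?_), ?_⟩
  · convert hyreg.linearIndependent (fun i => hW (hyW i (Finset.mem_univ i))) k using 1
    ext i
    simp [Fintype.linearCombination_apply, hC]
  · rw [hCq]
    exact ⟨hyreg, fun A hA => hydet A hA (by simp)⟩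

lemma IsRegularFamily.det_notMem_span_mulVec_of_isLocalRing [DecidableEq ι] (k : Type*) [Field k]
    [Infinite k] [Algebra k R] (hreg : IsRegularFamily x) (hx : ∀ i, x i ∈ maximalIdeal R)
    (A : Matrix ι ι R)
    (hxA : ∀ i, x i ∈ (Ideal.span (Set.range (A *ᵥ x))).radical) :
    A.det ∉ Ideal.span (Set.range (A *ᵥ x)) := by
  have hq : ∀ i, (A *ᵥ x) i ∈ maximalIdeal R := fun i =>
    ((span_range_mulVec_le A x).trans (span_range_le_maximalIdeal hx))
      (Ideal.subset_span (Set.mem_range_self i))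
  obtain ⟨C, hC, -, hdet⟩ := hreg.exists_isRegularFamily_mulVec k hx hq hxA
  have hunit : IsUnit (C.map (algebraMap k R)) := hC.map (algebraMap k R).mapMatrix
  have hCA := hdet (C.map (algebraMap k R) * A) (mulVec_mulVec _ _ _).symm
  rw [span_range_mulVec_of_isUnit hunit, det_mul] at hCA
  exact fun h => hCA (Ideal.mul_mem_left _ _ h)

lemma IsRegularFamily.syzygy_mem_of_isLocalRing (k : Type*) [Field k] [Infinite k]
    [Algebra k R] (hreg : IsRegularFamily x) (hx : ∀ i, x i ∈ maximalIdeal R)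
    (hq : ∀ i, q i ∈ maximalIdeal R)
    (hxq : ∀ i, x i ∈ (Ideal.span (Set.range q)).radical) {u : ι → R}
    (hu : ∑ i, u i * q i = 0) (i : ι) : u i ∈ Ideal.span (Set.range q) := by
  classical
  obtain ⟨C, hC, hy, -⟩ := hreg.exists_isRegularFamily_mulVec k hx hq hxq
  set B := C.map (algebraMap k R)
  have hB : IsUnit B := hC.map (algebraMap k R).mapMatrix
  have hBq := span_range_mulVec_of_isUnit hB q
  have hymax : ∀ i, (B *ᵥ q) i ∈ maximalIdeal R := fun i =>
    span_range_le_maximalIdeal hq (hBq ▸ Ideal.subset_span (Set.mem_range_self i))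
  have huB : u ᵥ* B⁻¹ ᵥ* B = u := by
    rw [vecMul_vecMul, nonsing_inv_mul _ ((isUnit_iff_isUnit_det B).mp hB), vecMul_one]
  have hrel : ∑ i, (u ᵥ* B⁻¹) i * (B *ᵥ q) i = 0 := by
    change u ᵥ* B⁻¹ ⬝ᵥ B *ᵥ q = 0
    rwa [dotProduct_mulVec, huB]
  rw [← huB, ← hBq]
  exact sum_mem fun j _ => Ideal.mul_mem_right _ _ (hy.syzygy_mem hymax hrel j)

end Local

lemma span_range_algebraMap_comp {κ S T : Type*} [CommRing S] [CommRing T] [Algebra S T]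
    (q : κ → S) :
    Ideal.span (Set.range (algebraMap S T ∘ q)) =
      (Ideal.span (Set.range q)).map (algebraMap S T) := by
  rw [Ideal.map_span, Set.range_comp]

variable {ι S : Type*} [Fintype ι] [CommRing S] [IsNoetherianRing S] {m : Ideal S} {x : ι → S}

theorem IsRegularFamily.det_notMem_span_mulVec [DecidableEq ι] (k : Type*) [Field k] [Infinite k]
    [Algebra k S] [m.IsPrime] (hreg : IsRegularFamily x) (hx : ∀ i, x i ∈ m)
    (A : Matrix ι ι S) (hxA : ∀ i, x i ∈ (Ideal.span (Set.range (A *ᵥ x))).radical) :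
    A.det ∉ Ideal.span (Set.range (A *ᵥ x)) := by
  let R := Localization.AtPrime m
  let φ : S →+* R := algebraMap S R
  have : IsNoetherianRing R := IsLocalization.isNoetherianRing m.primeCompl R inferInstance
  have hφx : ∀ i, φ (x i) ∈ maximalIdeal R := fun i =>
    Localization.AtPrime.map_eq_maximalIdeal (I := m) ▸ Ideal.mem_map_of_mem φ (hx i)
  have hφA : A.map φ *ᵥ (φ ∘ x) = φ ∘ (A *ᵥ x) := funext fun i => (φ.map_mulVec A x i).symm
  have hlocal := (hreg.of_isLocalization m.primeCompl R).det_notMem_span_mulVec_of_isLocalRing k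
    hφx (A.map φ) (fun i => by
      rw [hφA, span_range_algebraMap_comp]
      exact Ideal.map_radical_le φ (Ideal.mem_map_of_mem φ (hxA i)))
  rw [hφA, span_range_algebraMap_comp, ← RingHom.mapMatrix_apply, ← RingHom.map_det] at hlocal
  exact fun h => hlocal (Ideal.mem_map_of_mem φ h)

theorem IsRegularFamily.syzygy_mem_of_radical_eq (k : Type*) [Field k] [Infinite k] [Algebra k S]
    [m.IsMaximal] (hreg : IsRegularFamily x) (hx : ∀ i, x i ∈ m) {q : ι → S}
    (hq : (Ideal.span (Set.range q)).radical = m) {u : ι → S} (hu : ∑ i, u i * q i = 0) (i : ι) :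
    u i ∈ Ideal.span (Set.range q) := by
  let R := Localization.AtPrime m
  let φ : S →+* R := algebraMap S R
  have : IsNoetherianRing R := IsLocalization.isNoetherianRing m.primeCompl R inferInstance
  have hφm {f : S} (hf : f ∈ m) : φ f ∈ maximalIdeal R :=
    Localization.AtPrime.map_eq_maximalIdeal (I := m) ▸ Ideal.mem_map_of_mem φ hf
  have hlocal := (hreg.of_isLocalization m.primeCompl R).syzygy_mem_of_isLocalRing k
    (fun i => hφm (hx i)) (q := φ ∘ q)
    (fun i => hφm (hq.le (Ideal.le_radical (Ideal.subset_span (Set.mem_range_self i)))))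
    (fun i => by
      rw [span_range_algebraMap_comp]
      exact Ideal.map_radical_le φ (Ideal.mem_map_of_mem φ (hq.ge (hx i))))
    (u := φ ∘ u) (by simpa using congrArg φ hu) i
  rw [span_range_algebraMap_comp, Function.comp_apply,
    IsLocalization.algebraMap_mem_map_algebraMap_iff m.primeCompl] at hlocal
  obtain ⟨s, hs, hsu⟩ := hlocal
  have hprimary : (Ideal.span (Set.range q)).IsPrimary :=
    Ideal.isPrimary_of_isMaximal_radical (hq ▸ ‹m.IsMaximal›)
  exact ((Ideal.isPrimary_iff.mp hprimary).2 (mul_comm s (u i) ▸ hsu)).resolve_right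
    fun h => hs (hq.le h)

end CompleteIntersection

/-! ### The Jacobian determinant of forms of equal degree -/

section Jacobian

open Matrix

/-- The Jacobian matrix of a family of polynomials, with one row for each polynomial. -/
noncomputable def jacobianMatrix {ι σ K : Type*} [CommRing K] (Q : ι → MvPolynomial σ K) :
    Matrix ι σ (MvPolynomial σ K) :=
  of fun i j => pderiv j (Q i)

/-- The Jacobian determinant of as many polynomials as there are variables. -/
noncomputable def jacobianDet {σ K : Type*} [Fintype σ] [DecidableEq σ] [CommRing K]
    (Q : σ → MvPolynomial σ K) : MvPolynomial σ K :=
  (jacobianMatrix Q).det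

variable {σ K : Type*} [Fintype σ] [CommRing K] {d : ℕ}

lemma jacobianMatrix_mulVec_X {ι : Type*} {Q : ι → MvPolynomial σ K}
    (hQ : ∀ i, (Q i).IsHomogeneous d) : jacobianMatrix Q *ᵥ X = d • Q := by
  ext1 i
  simpa [mulVec, dotProduct, jacobianMatrix, mul_comm] using (hQ i).sum_X_mul_pderiv

variable [DecidableEq σ] {Q : σ → MvPolynomial σ K}

lemma jacobianDet_isHomogeneous (hQ : ∀ i, (Q i).IsHomogeneous d) :
    (jacobianDet Q).IsHomogeneous (Fintype.card σ * (d - 1)) := by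
  rw [jacobianDet, det_apply']
  refine IsHomogeneous.sum _ _ _ fun τ _ => ?_
  have hprod : (∏ i, jacobianMatrix Q (τ i) i).IsHomogeneous (∑ _i : σ, (d - 1)) :=
    IsHomogeneous.prod _ _ _ fun i _ => (hQ (τ i)).pderiv
  simpa using (isHomogeneous_C σ ((Equiv.Perm.sign τ : ℤ) : K)).mul hprod

lemma X_mul_jacobianDet (hQ : ∀ i, (Q i).IsHomogeneous d) (k : σ) :
    X k * jacobianDet Q =
      (d : MvPolynomial σ K) * ∑ i, (jacobianMatrix Q).adjugate k i * Q i := by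
  have h := congrFun (mulVec_mulVec X (jacobianMatrix Q).adjugate (jacobianMatrix Q)) k
  rw [adjugate_mul, smul_mulVec, one_mulVec, jacobianMatrix_mulVec_X hQ, mulVec_smul] at h
  simpa [mul_comm, mulVec, dotProduct, jacobianDet] using h.symm

lemma X_mul_jacobianDet_mem (hQ : ∀ i, (Q i).IsHomogeneous d) (k : σ) :
    X k * jacobianDet Q ∈ Ideal.span (Set.range Q) := by
  rw [X_mul_jacobianDet hQ]
  exact Ideal.mul_mem_left _ _ <| sum_mem fun i _ =>
    Ideal.mul_mem_left _ _ (Ideal.subset_span (Set.mem_range_self i))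

lemma X_mul_pderiv_jacobianDet_sub_mem (hQ : ∀ i, (Q i).IsHomogeneous d) (k l : σ) :
    X k * pderiv l (jacobianDet Q) - (if k = l then (d - 1) * jacobianDet Q else 0) ∈
      Ideal.span (Set.range Q) := by
  have hadj : ∑ i, (jacobianMatrix Q).adjugate k i * pderiv l (Q i) =
      if k = l then jacobianDet Q else 0 := by
    have h := congrFun₂ (adjugate_mul (jacobianMatrix Q)) k l
    simpa [Matrix.mul_apply, jacobianMatrix, jacobianDet, one_apply] using h
  have hderiv : X k * pderiv l (jacobianDet Q) + (if k = l then jacobianDet Q else 0) =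
      (d : MvPolynomial σ K) * (∑ i, Q i * pderiv l ((jacobianMatrix Q).adjugate k i) +
        if k = l then jacobianDet Q else 0) := by
    have h := congrArg (pderiv l) (X_mul_jacobianDet hQ k)
    simp only [Derivation.leibniz, Derivation.map_natCast, map_sum, smul_eq_mul,
      Finset.sum_add_distrib, pderiv_X, Pi.single_apply, mul_ite, mul_one, mul_zero, hadj] at h
    linear_combination h
  have hsum : (d : MvPolynomial σ K) * ∑ i, Q i * pderiv l ((jacobianMatrix Q).adjugate k i) ∈
      Ideal.span (Set.range Q) :=
    Ideal.mul_mem_left _ _ <| sum_mem fun i _ =>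
      Ideal.mul_mem_right _ _ (Ideal.subset_span (Set.mem_range_self i))
  convert hsum using 1
  split_ifs with hkl
  · simp only [hkl, if_true] at hderiv ⊢
    linear_combination hderiv
  · simp only [hkl, if_false] at hderiv ⊢
    linear_combination hderiv

end Jacobian

lemma eval_eq_zero_of_mem_span_range {ι σ K : Type*} [CommRing K] {Q : ι → MvPolynomial σ K}
    {p : σ → K} (hp : ∀ i, eval p (Q i) = 0) {f : MvPolynomial σ K}
    (hf : f ∈ Ideal.span (Set.range Q)) : eval p f = 0 :=
  (Ideal.span_le (I := RingHom.ker (eval p))).mpr (Set.range_subset_iff.mpr hp) hf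

section CommonZero

variable {σ K : Type*} [Fintype σ] [DecidableEq σ] [CommRing K] [IsDomain K] {d : ℕ}
  {Q : σ → MvPolynomial σ K} {p : σ → K}

lemma eval_jacobianDet_eq_zero (hQ : ∀ i, (Q i).IsHomogeneous d) (hp0 : p ≠ 0)
    (hp : ∀ i, eval p (Q i) = 0) : eval p (jacobianDet Q) = 0 := by
  obtain ⟨k, hk⟩ := Function.ne_iff.mp hp0
  have h := eval_eq_zero_of_mem_span_range hp (X_mul_jacobianDet_mem hQ k)
  rw [map_mul, eval_X] at h
  exact (mul_eq_zero.mp h).resolve_left hk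

lemma eval_pderiv_jacobianDet_eq_zero (hQ : ∀ i, (Q i).IsHomogeneous d) (hp0 : p ≠ 0)
    (hp : ∀ i, eval p (Q i) = 0) (l : σ) : eval p (pderiv l (jacobianDet Q)) = 0 := by
  obtain ⟨k, hk⟩ := Function.ne_iff.mp hp0
  have h := eval_eq_zero_of_mem_span_range hp (X_mul_pderiv_jacobianDet_sub_mem hQ k l)
  rw [map_sub, apply_ite (eval p), map_mul _ (_ - 1), eval_jacobianDet_eq_zero hQ hp0 hp,
    mul_zero, map_zero, ite_self, sub_zero, map_mul, eval_X] at h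
  exact (mul_eq_zero.mp h).resolve_left hk

end CommonZero

lemma eq_zero_of_isHomogeneous_of_mem_span_range {ι σ K : Type*} [CommRing K] {d e : ℕ}
    {Q : ι → MvPolynomial σ K} (hQ : ∀ i, (Q i).IsHomogeneous d) {f : MvPolynomial σ K}
    (hf : f.IsHomogeneous e) (hed : e < d) (hmem : f ∈ Ideal.span (Set.range Q)) : f = 0 := by
  have hle : Ideal.span (Set.range Q) ≤ idealOfVars σ K ^ d :=
    Ideal.span_le.mpr <| Set.range_subset_iff.mpr fun i =>
      (mem_pow_idealOfVars_iff' _ _).mpr fun x hx => (hQ i).coeff_eq_zero hx.ne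
  ext x
  by_cases hx : x.degree = e
  · exact (mem_pow_idealOfVars_iff' _ _).mp (hle hmem) x (hx ▸ hed)
  · exact hf.coeff_eq_zero hx

section NoCommonZero

variable {σ K : Type*} [Field K] [IsAlgClosed K] {d : ℕ}

lemma radical_span_range_eq_vanishingIdeal [Finite σ] {ι : Type*} {Q : ι → MvPolynomial σ K}
    (hQ : ∀ i, (Q i).IsHomogeneous d) (hd : d ≠ 0)
    (hno : ∀ p : σ → K, (∀ i, eval p (Q i) = 0) → p = 0) :
    (Ideal.span (Set.range Q)).radical = vanishingIdeal K {(0 : σ → K)} := by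
  rw [← vanishingIdeal_zeroLocus_eq_radical (K := K), zeroLocus_span]
  congr 1
  ext p
  have hzero : p = 0 → ∀ i, eval p (Q i) = 0 := by
    rintro rfl i
    rw [eval_zero]
    exact (hQ i).coeff_eq_zero (by simpa using hd.symm)
  simpa [aeval_eq_eval] using ⟨hno p, hzero⟩

variable [Fintype σ] {Q : σ → MvPolynomial σ K}

theorem eq_zero_of_sum_mul_eq_zero_of_isHomogeneous (hQ : ∀ i, (Q i).IsHomogeneous d)
    (hno : ∀ p : σ → K, (∀ i, eval p (Q i) = 0) → p = 0) {e : ℕ} (hed : e < d)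
    {L : σ → MvPolynomial σ K} (hL : ∀ i, (L i).IsHomogeneous e) (hsum : ∑ i, L i * Q i = 0) :
    L = 0 := by
  have hrad := radical_span_range_eq_vanishingIdeal hQ (Nat.ne_zero_of_lt hed) hno
  funext i
  exact eq_zero_of_isHomogeneous_of_mem_span_range hQ (hL i) hed <|
    isRegularFamily_X.syzygy_mem_of_radical_eq K (by simp) hrad hsum i

variable [DecidableEq σ]

theorem jacobianDet_notMem_span_range (hQ : ∀ i, (Q i).IsHomogeneous d) (hd : (d : K) ≠ 0)
    (hno : ∀ p : σ → K, (∀ i, eval p (Q i) = 0) → p = 0) :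
    jacobianDet Q ∉ Ideal.span (Set.range Q) := by
  let A : Matrix σ σ (MvPolynomial σ K) := (C (d : K)⁻¹ : MvPolynomial σ K) • jacobianMatrix Q
  have hA : A.mulVec X = Q := by
    ext1 i
    rw [Matrix.smul_mulVec, jacobianMatrix_mulVec_X hQ, Pi.smul_apply, Pi.smul_apply,
      smul_eq_mul, nsmul_eq_mul, ← mul_assoc, ← map_natCast C, ← C_mul, inv_mul_cancel₀ hd, C_1,
      one_mul]
  have hrad := radical_span_range_eq_vanishingIdeal hQ (by rintro rfl; exact hd Nat.cast_zero) hno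
  have hX (i : σ) : (X i : MvPolynomial σ K) ∈ vanishingIdeal K {(0 : σ → K)} := by simp
  have hdet := isRegularFamily_X.det_notMem_span_mulVec K hX A (by rwa [hA, hrad])
  rw [hA, Matrix.det_smul] at hdet
  exact fun h => hdet (Ideal.mul_mem_left _ _ h)

theorem eq_zero_of_sum_C_mul_pderiv_jacobianDet_mem (hQ : ∀ i, (Q i).IsHomogeneous d)
    (hd : (d : K) ≠ 0) (hd1 : (d : K) - 1 ≠ 0)
    (hno : ∀ p : σ → K, (∀ i, eval p (Q i) = 0) → p = 0) {b : σ → K}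
    (hb : ∑ l, C (b l) * pderiv l (jacobianDet Q) ∈ Ideal.span (Set.range Q)) : b = 0 := by
  funext k
  by_contra hbk
  have hmem : C (b k) * (((d : MvPolynomial σ K) - 1) * jacobianDet Q) ∈
      Ideal.span (Set.range Q) := by
    have h := sub_mem (Ideal.mul_mem_left _ (X k) hb) <| sum_mem fun l (_ : l ∈ Finset.univ) =>
      Ideal.mul_mem_left _ (C (b l)) (X_mul_pderiv_jacobianDet_sub_mem hQ k l)
    simpa [mul_sub (C _), Finset.mul_sum, mul_left_comm (X k)] using h
  have hunit : IsUnit (C (b k) * ((d : MvPolynomial σ K) - 1)) := by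
    simpa only [map_mul, map_sub, map_natCast, map_one] using
      (IsUnit.mk0 _ (mul_ne_zero hbk hd1)).map (C (σ := σ))
  rw [← mul_assoc, Ideal.unit_mul_mem_iff_mem _ hunit] at hmem
  exact jacobianDet_notMem_span_range hQ hd hno hmem

end NoCommonZero

/-! ### Nanson's matrix -/

section Nanson

open Matrix

variable {K : Type*} [CommRing K] {Q : Fin 4 → MvPolynomial (Fin 4) K}

lemma nansonRow_castAdd (Q : Fin 4 → MvPolynomial (Fin 4) K) (i j : Fin 4) :
    nansonRow Q (Fin.castAdd 4 (finProdFinEquiv (i, j))) = X j * Q i := by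
  have hmod : ((j : ℕ) + 4 * i) % 4 = j := by omega
  have hdiv : ((j : ℕ) + 4 * i) / 4 = i := by omega
  have hlt : (j : ℕ) + 4 * i < 16 := by omega
  have hval : ((Fin.castAdd 4 (finProdFinEquiv (i, j)) : Fin 20) : ℕ) = j + 4 * i := rfl
  simp only [nansonRow, hval, hmod, hdiv, hlt, dif_pos]

lemma nansonRow_natAdd (Q : Fin 4 → MvPolynomial (Fin 4) K) (l : Fin 4) :
    nansonRow Q (Fin.natAdd 16 l) = pderiv l (jacobianDet Q) := by
  simp [nansonRow, jacobianDet, jacobianMatrix]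

lemma forall_fin_twenty {P : Fin 20 → Prop} :
    (∀ r, P r) ↔ (∀ i j : Fin 4, P (Fin.castAdd 4 (finProdFinEquiv (i, j)))) ∧
      ∀ l : Fin 4, P (Fin.natAdd 16 l) := by
  refine ⟨fun h => ⟨fun _ _ => h _, fun _ => h _⟩, fun h r => ?_⟩
  induction r using Fin.addCases (m := 16) (n := 4) with
  | left r =>
    obtain ⟨⟨i, j⟩, rfl⟩ := (finProdFinEquiv (m := 4) (n := 4)).surjective r
    exact h.1 i j
  | right l => exact h.2 l

lemma nansonRow_isHomogeneous (hQ : ∀ i, (Q i).IsHomogeneous 2) (r : Fin 20) :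
    (nansonRow Q r).IsHomogeneous 3 := by
  revert r
  simp only [forall_fin_twenty, nansonRow_castAdd, nansonRow_natAdd]
  exact ⟨fun i j => (isHomogeneous_X K j).mul (hQ i),
    fun l => (jacobianDet_isHomogeneous hQ).pderiv⟩

lemma eval_nansonRow_eq_zero [IsDomain K] (hQ : ∀ i, (Q i).IsHomogeneous 2) {p : Fin 4 → K}
    (hp0 : p ≠ 0) (hp : ∀ i, eval p (Q i) = 0) (r : Fin 20) : eval p (nansonRow Q r) = 0 := by
  revert r
  simp only [forall_fin_twenty, nansonRow_castAdd, nansonRow_natAdd]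
  exact ⟨fun i j => by rw [map_mul, hp, mul_zero], eval_pderiv_jacobianDet_eq_zero hQ hp0 hp⟩

lemma sum_smul_nansonRow (Q : Fin 4 → MvPolynomial (Fin 4) K) (v : Fin 20 → K) :
    ∑ r, v r • nansonRow Q r =
      ∑ i, (∑ j, C (v (Fin.castAdd 4 (finProdFinEquiv (i, j)))) * X j) * Q i +
        ∑ l, C (v (Fin.natAdd 16 l)) * pderiv l (jacobianDet Q) := by
  simp only [smul_eq_C_mul]
  rw [Fin.sum_univ_add (a := 16) (b := 4), ← Equiv.sum_comp (finProdFinEquiv (m := 4) (n := 4)),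
    Fintype.sum_prod_type]
  simp only [nansonRow_castAdd, nansonRow_natAdd, Finset.sum_mul, mul_assoc]

lemma cubicExp_injective : Function.Injective cubicExp := by
  refine Finsupp.equivFunOnFinite.symm.injective.comp fun a b => ?_
  revert a b
  decide

lemma exists_cubicExp_eq {x : Fin 4 →₀ ℕ} (hx : x.degree = 3) : ∃ c, cubicExp c = x := by
  have hfin : ∀ a b c e : Fin 4, (a : ℕ) + b + c + e = 3 →
      ∃ m, ⇑(cubicExp m) = ![(a : ℕ), b, c, e] := by
    simp only [cubicExp, Finsupp.coe_equivFunOnFinite_symm]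
    decide
  rw [Finsupp.degree_eq_sum, Fin.sum_univ_four] at hx
  obtain ⟨m, hm⟩ := hfin ⟨x 0, by omega⟩ ⟨x 1, by omega⟩ ⟨x 2, by omega⟩ ⟨x 3, by omega⟩ hx
  exact ⟨m, DFunLike.coe_injective (hm.trans (List.ofFn_injective rfl))⟩

lemma vecMul_nansonMatrix (Q : Fin 4 → MvPolynomial (Fin 4) K) (v : Fin 20 → K) (c : Fin 20) :
    (v ᵥ* nansonMatrix Q) c = coeff (cubicExp c) (∑ r, v r • nansonRow Q r) := by
  simp [vecMul, dotProduct, nansonMatrix, coeff_sum]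

lemma eq_zero_of_coeff_cubicExp {f : MvPolynomial (Fin 4) K} (hf : f.IsHomogeneous 3)
    (h : ∀ c, coeff (cubicExp c) f = 0) : f = 0 := by
  ext x
  by_cases hx : x.degree = 3
  · obtain ⟨c, rfl⟩ := exists_cubicExp_eq hx
    rw [h c, coeff_zero]
  · rw [hf.coeff_eq_zero hx, coeff_zero]

lemma eval_eq_sum_cubicExp {f : MvPolynomial (Fin 4) K} (hf : f.IsHomogeneous 3)
    (p : Fin 4 → K) : eval p f = ∑ c, coeff (cubicExp c) f * ∏ i, p i ^ cubicExp c i := by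
  rw [eval_eq', ← Finset.sum_image (f := fun x => coeff x f * ∏ i, p i ^ x i)
    cubicExp_injective.injOn]
  refine Finset.sum_subset (fun x hx => ?_) fun x _ hx => ?_
  · obtain ⟨c, rfl⟩ := exists_cubicExp_eq
      (not_not.mp fun hne => mem_support_iff.mp hx (hf.coeff_eq_zero hne))
    exact Finset.mem_image_of_mem _ (Finset.mem_univ c)
  · rw [notMem_support_iff.mp hx, zero_mul]

lemma nansonMatrix_mulVec_monomials (hQ : ∀ i, (Q i).IsHomogeneous 2) (p : Fin 4 → K) :
    nansonMatrix Q *ᵥ (fun c => ∏ i, p i ^ cubicExp c i) = fun r => eval p (nansonRow Q r) :=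
  funext fun r => (eval_eq_sum_cubicExp (nansonRow_isHomogeneous hQ r) p).symm

lemma eq_zero_of_prod_pow_cubicExp_eq_zero [IsDomain K] {p : Fin 4 → K}
    (hp : ∀ c, ∏ i, p i ^ cubicExp c i = 0) : p = 0 := by
  funext k
  obtain ⟨c, hc⟩ := exists_cubicExp_eq (Finsupp.degree_single k 3)
  have h := hp c
  rw [hc, Finset.prod_eq_single k (fun i _ hik => by simp [hik.symm]) (by simp),
    Finsupp.single_eq_same] at h
  exact eq_zero_of_pow_eq_zero h

theorem det_nansonMatrix_eq_zero [IsDomain K] (hQ : ∀ i, (Q i).IsHomogeneous 2) {p : Fin 4 → K}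
    (hp0 : p ≠ 0) (hp : ∀ i, eval p (Q i) = 0) : (nansonMatrix Q).det = 0 := by
  refine exists_mulVec_eq_zero_iff.mp ⟨fun c => ∏ i, p i ^ cubicExp c i,
    fun h => hp0 (eq_zero_of_prod_pow_cubicExp_eq_zero (congrFun h)), ?_⟩
  rw [nansonMatrix_mulVec_monomials hQ]
  exact funext (eval_nansonRow_eq_zero hQ hp0 hp)

end Nanson

section NansonIndependence

open Matrix

variable {K : Type*} [Field K] {Q : Fin 4 → MvPolynomial (Fin 4) K}

theorem linearIndependent_nansonRow [IsAlgClosed K] (h2 : (2 : K) ≠ 0)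
    (hQ : ∀ i, (Q i).IsHomogeneous 2)
    (hno : ∀ p : Fin 4 → K, (∀ i, eval p (Q i) = 0) → p = 0) :
    LinearIndependent K (nansonRow Q) := by
  refine Fintype.linearIndependent_iff.mpr fun v hv => ?_
  rw [sum_smul_nansonRow] at hv
  have hpderiv : (fun l : Fin 4 => v (Fin.natAdd 16 l)) = 0 := by
    refine eq_zero_of_sum_C_mul_pderiv_jacobianDet_mem hQ (by exact_mod_cast h2)
      (by norm_num) hno ?_
    rw [eq_neg_of_add_eq_zero_right hv]
    exact neg_mem <| sum_mem fun i _ =>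
      Ideal.mul_mem_left _ _ (Ideal.subset_span (Set.mem_range_self i))
  simp only [funext_iff, Pi.zero_apply] at hpderiv
  have hlinear := eq_zero_of_sum_mul_eq_zero_of_isHomogeneous hQ hno one_lt_two
    (fun i => IsHomogeneous.sum _ _ _ fun j _ => isHomogeneous_C_mul_X _ j)
    (by simpa only [hpderiv, C_0, zero_mul, Finset.sum_const_zero, add_zero] using hv)
  refine forall_fin_twenty.mpr ⟨fun i j => ?_, hpderiv⟩
  simpa [coeff_sum, coeff_X, Finsupp.single_left_inj] using
    congrArg (coeff (Finsupp.single j 1)) (congrFun hlinear i)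

theorem det_nansonMatrix_ne_zero_of_linearIndependent (hQ : ∀ i, (Q i).IsHomogeneous 2)
    (hind : LinearIndependent K (nansonRow Q)) : (nansonMatrix Q).det ≠ 0 := by
  intro hdet
  obtain ⟨v, hv0, hv⟩ := exists_vecMul_eq_zero_iff.mpr hdet
  refine hv0 (funext (Fintype.linearIndependent_iff.mp hind v ?_))
  refine eq_zero_of_coeff_cubicExp (IsHomogeneous.sum _ _ _ fun r _ => ?_) fun c => ?_
  · exact smul_eq_C_mul (nansonRow Q r) (v r) ▸ (nansonRow_isHomogeneous hQ r).C_mul (v r)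
  · rw [← vecMul_nansonMatrix, hv, Pi.zero_apply]

end NansonIndependence

theorem nanson_det_eq_zero_iff_common_zero_general {K : Type*} [Field K] [IsAlgClosed K]
    (h2 : (2 : K) ≠ 0) (Q : Fin 4 → MvPolynomial (Fin 4) K)
    (hQ : ∀ i, (Q i).IsHomogeneous 2) :
    (nansonMatrix Q).det = 0 ↔
      ∃ p : Fin 4 → K, p ≠ 0 ∧ ∀ i, eval p (Q i) = 0 := by
  refine ⟨fun hdet => by_contra fun hex => ?_, fun ⟨p, hp0, hp⟩ =>
    det_nansonMatrix_eq_zero hQ hp0 hp⟩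
  have hno (p : Fin 4 → K) (hp : ∀ i, eval p (Q i) = 0) : p = 0 :=
    by_contra fun hp0 => hex ⟨p, hp0, hp⟩
  exact det_nansonMatrix_ne_zero_of_linearIndependent hQ
    (linearIndependent_nansonRow h2 hQ hno) hdet

/-- **Nanson's theorem.** The determinant of Nanson's 20 × 20 matrix of four quaternary
quadratic forms over ℂ vanishes if and only if the four quadrics have a common
nontrivial zero (it is the resultant of the four quadrics). -/
theorem nanson_det_eq_zero_iff_common_zero
    (Q : Fin 4 → MvPolynomial (Fin 4) ℂ) (hQ : ∀ i, (Q i).IsHomogeneous 2) :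
    (nansonMatrix Q).det = 0 ↔
      ∃ p : Fin 4 → ℂ, p ≠ 0 ∧ ∀ i, eval p (Q i) = 0 :=
  nanson_det_eq_zero_iff_common_zero_general two_ne_zero Q hQ
end
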